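/- For each p ∈ {3,5,7} there is a full congruence of Fourier coefficients modulo p between Δ and a weight-two Eisenstein series E_p: for all n ≥ 0, τ(n) ≡ c_{2,ω_3^2,𝟙,n} (mod 3), τ(n) ≡ c_{2,ω_5^2,𝟙,n} (mod 5), and τ(n) ≡ c_{2,ω_7^4,𝟙,n} (mod 7). -/

import Mathlib

noncomputable section

/-- The Ramanujan tau function `τ(n)`: the `n`-th coefficient of the `q`-expansion
`q ∏_{m ≥ 1} (1 - q^m)²⁴` of `Δ` (the product may be truncated at `m = n` without changing
the `n`-th coefficient). -/
def ramanujanTau (n : ℕ) : ℤ :=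
  (Polynomial.X * ∏ m ∈ Finset.Icc 1 n, (1 - Polynomial.X ^ m) ^ 24 : Polynomial ℤ).coeff n

/-- The `n`-th Fourier coefficient `c_{k,a,b,n} = ∑_{d ∣ n} ω_p^a(n/d) ω_p^b(d) d^{k-1}` of the
Eisenstein series `E_{k, ω_p^a, ω_p^b}`, where `ω : ℤ → ℤ_[p]` is the Teichmüller character
mod `p`.  (For `n = 0` the sum is empty, giving constant term `0`, as is the case whenever
the first character is nontrivial.) -/
def eisCoeff (p : ℕ) [Fact p.Prime] (ω : ℤ → ℤ_[p]) (k a b : ℕ) (n : ℕ) : ℤ_[p] :=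
  ∑ d ∈ n.divisors, ω ((n / d : ℕ) : ℤ) ^ a * ω (d : ℤ) ^ b * (d : ℤ_[p]) ^ (k - 1)

end

instance : Fact (Nat.Prime 3) := ⟨by norm_num⟩
instance : Fact (Nat.Prime 5) := ⟨by norm_num⟩
instance : Fact (Nat.Prime 7) := ⟨by norm_num⟩


open UpperHalfPlane ModularForm EisensteinSeries in
lemma aux_iteratedDeriv_tendsto {ι : Type*} {l : Filter ι} {F : ι → ℂ → ℂ} {f : ℂ → ℂ} {U : Set ℂ}
    (hU : IsOpen U) (n : ℕ) (hF : ∀ i, DifferentiableOn ℂ (F i) U)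
    (h : TendstoLocallyUniformlyOn F f l U) :
    TendstoLocallyUniformlyOn (fun i => iteratedDeriv n (F i)) (iteratedDeriv n f) l U := by
  have key : (∀ i, DifferentiableOn ℂ (iteratedDeriv n (F i)) U) ∧
      TendstoLocallyUniformlyOn (fun i => iteratedDeriv n (F i)) (iteratedDeriv n f) l U := by
    induction n with
    | zero => simpa using ⟨hF, h⟩
    | succ n ih =>
      simp only [iteratedDeriv_succ]
      exact ⟨fun i => (ih.1 i).deriv hU, ih.2.deriv (.of_forall ih.1) hU⟩
  exact key.2

lemma aux_iteratedDeriv_poly (p : Polynomial ℂ) (n : ℕ) :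
    iteratedDeriv n (fun q => p.eval q) 0 = n.factorial * p.coeff n := by
  have h : ∀ p : Polynomial ℂ, iteratedDeriv n (fun q => p.eval q) =
      fun q => ((Polynomial.derivative^[n]) p).eval q := by
    induction n with
    | zero => simp
    | succ n ih =>
      intro p
      rw [iteratedDeriv_succ']
      have : deriv (fun q => p.eval q) = fun q => (Polynomial.derivative p).eval q := by
        funext q; simp
      rw [this, ih, Function.iterate_succ_apply]
  rw [h]
  simp only
  rw [← Polynomial.coeff_zero_eq_eval_zero, Polynomial.coeff_iterate_derivative]
  simp [Nat.descFactorial_self]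

lemma aux_trunc (n : ℕ) (s : Finset ℕ) (hs : Finset.range n ⊆ s) :
    (Polynomial.X * ∏ i ∈ s, (1 - Polynomial.X ^ (i + 1)) ^ 24 : Polynomial ℤ).coeff n
      = ramanujanTau n := by
  have h1 : (Polynomial.X : Polynomial ℤ) ^ (n + 1) ∣
      ∏ i ∈ s \ Finset.range n, (1 - Polynomial.X ^ (i + 1) : Polynomial ℤ) ^ 24 - 1 := by
    rw [← Ideal.mem_span_singleton, ← Ideal.Quotient.eq_zero_iff_mem, map_sub, map_prod, map_one,
      sub_eq_zero]
    apply Finset.prod_eq_one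
    intro i hi
    have hi' : n ≤ i := by simpa using (Finset.mem_sdiff.mp hi).2
    have : (Ideal.Quotient.mk (Ideal.span {(Polynomial.X : Polynomial ℤ) ^ (n + 1)}))
        (Polynomial.X ^ (i + 1)) = 0 := by
      rw [Ideal.Quotient.eq_zero_iff_mem, Ideal.mem_span_singleton]
      exact pow_dvd_pow _ (by omega)
    rw [map_pow, map_sub, this]; simp
  have h2 : (∏ m ∈ Finset.Icc 1 n, (1 - Polynomial.X ^ m) ^ 24 : Polynomial ℤ)
      = ∏ i ∈ Finset.range n, (1 - Polynomial.X ^ (i + 1)) ^ 24 := by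
    rw [Finset.range_eq_Ico, Finset.prod_Ico_add' (fun m => (1 - Polynomial.X ^ m : Polynomial ℤ) ^ 24)]
    rfl
  obtain ⟨r, hr⟩ := h1
  rw [ramanujanTau, h2, ← Finset.prod_sdiff hs, sub_eq_iff_eq_add.mp hr]
  rw [show (Polynomial.X * ((Polynomial.X ^ (n + 1) * r + 1) *
    ∏ i ∈ Finset.range n, (1 - Polynomial.X ^ (i + 1)) ^ 24) : Polynomial ℤ) =
    (Polynomial.X * ∏ i ∈ Finset.range n, (1 - Polynomial.X ^ (i + 1)) ^ 24) +
    Polynomial.X ^ (n + 1) * (r * Polynomial.X *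
      ∏ i ∈ Finset.range n, (1 - Polynomial.X ^ (i + 1)) ^ 24) by ring,
    Polynomial.coeff_add, Polynomial.coeff_X_pow_mul']
  simp

open UpperHalfPlane ModularForm EisensteinSeries Filter Topology in
lemma aux_delta_coeff (n : ℕ) :
    (qExpansion 1 ModularForm.discriminant).coeff n = (ramanujanTau n : ℂ) := by
  set U := Metric.ball (0 : ℂ) 1
  have hU : IsOpen U := Metric.isOpen_ball
  have h0 : (0 : ℂ) ∈ U := Metric.mem_ball_self one_pos
  have hP : TendstoLocallyUniformlyOn (fun (s : Finset ℕ) (q : ℂ) => ∏ i ∈ s, (1 - q ^ (i + 1)))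
      (fun q => ∏' i, (1 - q ^ (i + 1))) atTop U :=
    multipliableLocallyUniformlyOn_one_sub_pow.hasProdLocallyUniformlyOn
  have hPc : ContinuousOn (fun q : ℂ => ∏' i, (1 - q ^ (i + 1))) U :=
    differentiableOn_tprod_one_sub_pow.continuousOn
  have hpow : ∀ k : ℕ, TendstoLocallyUniformlyOn
      (fun (s : Finset ℕ) (q : ℂ) => (∏ i ∈ s, (1 - q ^ (i + 1))) ^ k)
      (fun q => (∏' i, (1 - q ^ (i + 1))) ^ k) atTop U := by
    intro k
    induction k with
    | zero => 
      simp only [pow_zero]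
      intro u hu x _
      exact ⟨Set.univ, by simp, .of_forall fun _ _ _ => refl_mem_uniformity hu⟩
    | succ k ih =>
      simp only [pow_succ]
      exact ih.mul₀ hP (hPc.pow k) hPc
  have hX : TendstoLocallyUniformlyOn (fun (_ : Finset ℕ) (q : ℂ) => q) (fun q => q) atTop U := by
    intro u hu x _
    exact ⟨Set.univ, by simp, .of_forall fun _ _ _ => refl_mem_uniformity hu⟩
  have hmain := hX.mul₀ (hpow 24) continuousOn_id (hPc.pow 24)
  have hd := (aux_iteratedDeriv_tendsto hU n (fun s => by
    refine DifferentiableOn.mul differentiableOn_id (DifferentiableOn.fun_pow ?_ 24)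
    exact DifferentiableOn.fun_finsetProd (fun _ _ ↦ by fun_prop)) hmain).tendsto_at h0
  have hconst : ∀ᶠ s : Finset ℕ in atTop, iteratedDeriv n
      ((fun q => q) * fun (q : ℂ) => (∏ i ∈ s, (1 - q ^ (i + 1))) ^ 24) 0
        = n.factorial * (ramanujanTau n : ℂ) := by
    filter_upwards [eventually_ge_atTop (Finset.range n)] with s hs
    have := aux_iteratedDeriv_poly ((Polynomial.X * ∏ i ∈ s, (1 - Polynomial.X ^ (i + 1)) ^ 24 :
      Polynomial ℤ).map (Int.castRingHom ℂ)) n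
    rw [Polynomial.coeff_map, aux_trunc n s hs] at this
    rw [eq_intCast] at this
    rw [← this]
    congr 1
    funext q
    simp [Polynomial.map_prod, Polynomial.eval_prod, Finset.prod_pow]
  have hlim := tendsto_nhds_unique (hd.congr' hconst) tendsto_const_nhds
  rw [qExpansion_coeff]
  have heq : cuspFunction 1 ModularForm.discriminant =ᶠ[𝓝 0]
      ((fun q => q) * fun (q : ℂ) => (∏' i, (1 - q ^ (i + 1))) ^ 24) := by
    filter_upwards [hU.mem_nhds h0] with q hq
    rw [discriminant_cuspFunction_eqOn hq]
    simp only [Pi.mul_apply]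
    rw [(multipliable_one_sub_pow (by simpa [U] using hq)).tprod_pow 24]
  rw [heq.iteratedDeriv_eq n, hlim]
  field_simp [Nat.factorial_ne_zero]

open UpperHalfPlane in
lemma aux_periodic {f : ℍ → ℂ} {c : ℕ → ℂ}
    (hf : ∀ τ : ℍ, HasSum (fun m ↦ c m • (Function.Periodic.qParam 1 τ) ^ m) (f τ)) :
    Function.Periodic (f ∘ ofComplex) (1 : ℝ) := by
  intro w
  by_cases! hw : 0 < w.im
  · have hw' : 0 < (w + (1 : ℝ)).im := by simp [hw]
    simp only [Function.comp_apply, ofComplex_apply_of_im_pos hw', ofComplex_apply_of_im_pos hw]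
    have h1 := hf ⟨w, hw⟩
    have h2 := hf ⟨w + (1 : ℝ), hw'⟩
    have : Function.Periodic.qParam 1 (w + (1 : ℝ)) = Function.Periodic.qParam 1 w := by
      simp only [Function.Periodic.qParam, Complex.ofReal_one, div_one, mul_add, mul_one,
        Complex.exp_add, Complex.exp_two_pi_mul_I]
    simp only [this] at h2
    exact h2.unique h1
  · have hw' : (w + (1 : ℝ)).im ≤ 0 := by simpa using hw
    simp only [Function.comp_apply, ofComplex_apply_of_im_nonpos hw',
      ofComplex_apply_of_im_nonpos hw]

open UpperHalfPlane Manifold in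
lemma aux_analytic {f : ℍ → ℂ} {c : ℕ → ℂ} (hd : MDiff f)
    (hf : ∀ τ : ℍ, HasSum (fun m ↦ c m • (Function.Periodic.qParam 1 τ) ^ m) (f τ)) :
    AnalyticAt ℂ (cuspFunction 1 f) 0 :=
  analyticAt_cuspFunction_zero one_pos (aux_periodic hf) hd
    (isBoundedAtImInfty_of_hasSum_qExpansion one_pos hf)

open UpperHalfPlane ModularForm Manifold Derivative in
lemma aux_D_hasSum {k : ℤ} (f : ModularForm (MonoidHom.range (Matrix.SpecialLinearGroup.mapGL ℝ : Matrix.SpecialLinearGroup (Fin 2) ℤ →* _)) k) (τ : ℍ) :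
    HasSum (fun m : ℕ ↦ ((m : ℂ) * (qExpansion 1 f).coeff m) • (Function.Periodic.qParam 1 τ) ^ m)
      (normalizedDerivOfComplex f τ) := by
  have hper := SlashInvariantFormClass.periodic_comp_ofComplex f one_mem_strictPeriods_SL
  have hdiff : DifferentiableOn ℂ (cuspFunction 1 f) (Metric.ball 0 1) :=
    differentiableOn_cuspFunction_ball one_pos hper f.holo' (ModularFormClass.bdd_at_infty f)
  set q := Function.Periodic.qParam 1 (τ : ℂ) with hq
  have hq1 : q ∈ Metric.ball (0 : ℂ) 1 := by
    simpa using Function.Periodic.norm_qParam_lt_one one_pos τ.im_pos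
  have hderiv : normalizedDerivOfComplex f τ = q * deriv (cuspFunction 1 f) q := by
    have heq : (f ∘ ofComplex) =ᶠ[nhds (τ : ℂ)]
        (cuspFunction 1 f) ∘ (Function.Periodic.qParam 1) := by
      filter_upwards [isOpen_upperHalfPlaneSet.mem_nhds τ.2] with z hz
      have := eq_cuspFunction (f := f) ⟨z, hz⟩ one_ne_zero hper
      simp only [Function.comp_apply, ofComplex_apply_of_im_pos hz]
      exact this.symm
    have hqd : HasDerivAt (Function.Periodic.qParam 1) (2 * Real.pi * Complex.I * q) (τ : ℂ) := by
      have h := ((hasDerivAt_id (τ : ℂ)).const_mul (2 * Real.pi * Complex.I)).cexp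
      have he : Function.Periodic.qParam 1 = fun z : ℂ => Complex.exp (2 * Real.pi * Complex.I * id z) := by
        funext z; simp [Function.Periodic.qParam]
      rw [hq, he]
      refine h.congr_deriv ?_
      simp [mul_comm]
    rw [normalizedDerivOfComplex, heq.deriv_eq]
    have h1 := (hdiff.differentiableAt (Metric.isOpen_ball.mem_nhds hq1)).hasDerivAt
    rw [(h1.comp (τ : ℂ) hqd).deriv]
    have : (2 * Real.pi * Complex.I : ℂ) ≠ 0 := by simp [Real.pi_ne_zero]
    field_simp
  rw [hderiv]
  have hs := (Complex.hasSum_taylorSeries_on_ball (hdiff.deriv Metric.isOpen_ball) hq1).mul_left q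
  rw [← hasSum_nat_add_iff' 1]
  simp only [Finset.range_one, Finset.sum_singleton, Nat.cast_zero, zero_mul, zero_smul, sub_zero]
  suffices hfun : (fun m : ℕ => (((m + 1 : ℕ) : ℂ) * (qExpansion 1 f).coeff (m + 1)) • q ^ (m + 1)) =
      _ from hfun ▸ hs
  funext m
  rw [qExpansion_coeff, iteratedDeriv_succ', Nat.factorial_succ]
  simp only [smul_eq_mul, sub_zero]
  have := Nat.factorial_ne_zero m
  push_cast
  field_simp
  ring

open UpperHalfPlane ModularForm Manifold Derivative MatrixGroups in
lemma aux_serre_bdd {k : ℤ} (f : ModularForm 𝒮ℒ k) :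
    IsBoundedAtImInfty (serreDerivative k f) := by
  have h1 : IsBoundedAtImInfty (normalizedDerivOfComplex f) :=
    isBoundedAtImInfty_of_hasSum_qExpansion one_pos (aux_D_hasSum f)
  have h2 := (EisensteinSeries.isBoundedAtImInfty_E2.mul (ModularFormClass.bdd_at_infty f))
  have h3 := h1.sub (h2.const_mul_left ((k : ℂ) * 12⁻¹))
  have h4 : serreDerivative k f = (normalizedDerivOfComplex f : ℍ → ℂ) -
      fun x => ((k : ℂ) * 12⁻¹) * (EisensteinSeries.E2 * (f : ℍ → ℂ)) x := by
    funext z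
    simp [serreDerivative]
    ring
  rw [h4]
  exact h3

open UpperHalfPlane ModularForm Manifold Derivative MatrixGroups in
/-- The Serre derivative of a level one modular form. -/
noncomputable def auxSerre {k : ℤ} (f : ModularForm 𝒮ℒ k) : ModularForm 𝒮ℒ (k + 2) where
  toFun := serreDerivative k f
  slash_action_eq' := fun _ ⟨γ, hγ⟩ ↦ hγ ▸ serreDerivative_slash_invariant f.holo'
    (f.slash_action_eq' _ ⟨γ, rfl⟩)
  holo' := serreDerivative_mdifferentiable _ f.holo'
  bdd_at_cusps' {c} hc := by
    rw [Subgroup.IsArithmetic.isCusp_iff_isCusp_SL2Z] at hc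
    rw [OnePoint.isBoundedAt_iff_forall_SL2Z hc]
    intro γ _
    have h : serreDerivative k (f : ℍ → ℂ) ∣[k + 2] γ = serreDerivative k (f : ℍ → ℂ) :=
      serreDerivative_slash_invariant f.holo' (f.slash_action_eq' _ ⟨γ, rfl⟩)
    have h' := aux_serre_bdd f
    rw [← h] at h'
    exact h'

open UpperHalfPlane ModularForm Manifold Derivative MatrixGroups in
lemma auxSerre_qExpansion {k : ℤ} (f : ModularForm 𝒮ℒ k) :
    qExpansion 1 (auxSerre f) = PowerSeries.mk (fun m => (m : ℂ) * (qExpansion 1 f).coeff m)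
      - ((k : ℂ) * 12⁻¹) • (qExpansion 1 EisensteinSeries.E2 * qExpansion 1 f) := by
  have hD : AnalyticAt ℂ (cuspFunction 1 (normalizedDerivOfComplex f)) 0 :=
    aux_analytic (normalizedDerivOfComplex_mdifferentiable f.holo') (aux_D_hasSum f)
  have hE : AnalyticAt ℂ (cuspFunction 1 EisensteinSeries.E2) 0 :=
    aux_analytic E2_mdifferentiable (fun τ => by
      simpa only [Function.Periodic.qParam, Complex.ofReal_one, div_one]
        using EisensteinSeries.hasSum_qExpansion_E2 (z := τ))
  have hf := ModularFormClass.analyticAt_cuspFunction_zero f one_pos one_mem_strictPeriods_SL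
  have hEf : AnalyticAt ℂ (cuspFunction 1 (EisensteinSeries.E2 * (f : ℍ → ℂ))) 0 := by
    rw [cuspFunction_mul hE.continuousAt hf.continuousAt]; exact hE.mul hf
  have hsEf : AnalyticAt ℂ (cuspFunction 1 (((k : ℂ) * 12⁻¹) • (EisensteinSeries.E2 * (f : ℍ → ℂ)))) 0 := by
    rw [cuspFunction_smul hEf.continuousAt]; exact hEf.const_smul
  have : (auxSerre f : ℍ → ℂ) = normalizedDerivOfComplex f -
      ((k : ℂ) * 12⁻¹) • (EisensteinSeries.E2 * (f : ℍ → ℂ)) := by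
    funext z
    change serreDerivative k f z = _
    simp [serreDerivative]
    ring
  rw [this, qExpansion_sub hD hsEf, qExpansion_smul hEf, qExpansion_mul hE hf]
  congr 1
  ext m
  rw [PowerSeries.coeff_mk]
  have h1 := (hasFPowerSeriesOnBall_cuspFunction one_pos hD (aux_D_hasSum f)).hasFPowerSeriesAt
  have h2 : HasFPowerSeriesAt (cuspFunction 1 (normalizedDerivOfComplex f))
      (FormalMultilinearSeries.ofScalars ℂ
        fun m => (qExpansion 1 (normalizedDerivOfComplex f)).coeff m) 0 := by
    simpa [qExpansion_coeff, div_eq_mul_inv, mul_comm] using hD.hasFPowerSeriesAt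
  simpa using (congr_arg (FormalMultilinearSeries.coeff · m)
    (h1.eq_formalMultilinearSeries h2)).symm

open UpperHalfPlane ModularForm MatrixGroups EisensteinSeries in
/-- The weight twelve bracket of `E₄` and `E₆`. -/
noncomputable def auxBracket : ModularForm 𝒮ℒ 12 :=
  (2 : ℂ) • ModularForm.mcast (by norm_num) (E₄.mul (auxSerre E₆)) -
    (3 : ℂ) • ModularForm.mcast (by norm_num) (E₆.mul (auxSerre E₄))

/-- The operator `q d/dq` on power series. -/
noncomputable def auxTheta {R : Type*} [CommRing R] (f : PowerSeries R) : PowerSeries R :=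
  PowerSeries.mk fun m => (m : R) * f.coeff m

open UpperHalfPlane ModularForm MatrixGroups EisensteinSeries in
lemma auxBracket_qExpansion : qExpansion 1 auxBracket =
    (2 : ℂ) • (qExpansion 1 E₄ * auxTheta (qExpansion 1 E₆)) -
      (3 : ℂ) • (qExpansion 1 E₆ * auxTheta (qExpansion 1 E₄)) := by
  have h4 := auxSerre_qExpansion E₄
  have h6 := auxSerre_qExpansion E₆
  rw [auxBracket, FunLike.coe_sub, ModularForm.qExpansion_sub one_pos one_mem_strictPeriods_SL,
    FunLike.coe_smul, FunLike.coe_smul,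
    ModularForm.qExpansion_smul one_pos one_mem_strictPeriods_SL,
    ModularForm.qExpansion_smul one_pos one_mem_strictPeriods_SL, coe_mcast, coe_mcast,
    ModularForm.qExpansion_mul one_pos one_mem_strictPeriods_SL,
    ModularForm.qExpansion_mul one_pos one_mem_strictPeriods_SL, h4, h6, auxTheta, auxTheta]
  simp only [PowerSeries.smul_eq_C_mul]
  have e1 : (PowerSeries.C (((6:ℤ) : ℂ) * 12⁻¹) : PowerSeries ℂ) * 2 = 1 := by
    rw [show (2 : PowerSeries ℂ) = PowerSeries.C 2 from (map_ofNat _ 2).symm, ← map_mul]; norm_num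
  have e2 : (PowerSeries.C (((4:ℤ) : ℂ) * 12⁻¹) : PowerSeries ℂ) * 3 = 1 := by
    rw [show (3 : PowerSeries ℂ) = PowerSeries.C 3 from (map_ofNat _ 3).symm, ← map_mul]; norm_num
  simp only [map_ofNat]
  push_cast at e1 e2 ⊢
  linear_combination (-(qExpansion 1 E₄ * qExpansion 1 EisensteinSeries.E2 * qExpansion 1 E₆)) * (e1 - e2)

open UpperHalfPlane ModularForm MatrixGroups EisensteinSeries in
lemma aux_E4_coeff (m : ℕ) : (qExpansion 1 E₄).coeff m =
    if m = 0 then 1 else 240 * (ArithmeticFunction.sigma 3 m : ℂ) := by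
  rw [E_qExpansion_coeff _ ⟨2, rfl⟩, show bernoulli 4 = -1/30 by decide +kernel]
  norm_num

open UpperHalfPlane ModularForm MatrixGroups EisensteinSeries in
lemma aux_E6_coeff (m : ℕ) : (qExpansion 1 E₆).coeff m =
    if m = 0 then 1 else -504 * (ArithmeticFunction.sigma 5 m : ℂ) := by
  rw [E_qExpansion_coeff _ ⟨3, rfl⟩, show bernoulli 6 = 1/42 by decide +kernel]
  norm_num

open UpperHalfPlane ModularForm MatrixGroups EisensteinSeries in
lemma aux_E8_coeff (m : ℕ) : (qExpansion 1 (E (show 3 ≤ 8 by norm_num))).coeff m =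
    if m = 0 then 1 else 480 * (ArithmeticFunction.sigma 7 m : ℂ) := by
  rw [E_qExpansion_coeff _ ⟨4, rfl⟩, show bernoulli 8 = -1/30 by decide +kernel]
  norm_num

open UpperHalfPlane ModularForm MatrixGroups EisensteinSeries in
lemma aux_identity_two : qExpansion 1 (E (show 3 ≤ 8 by norm_num)) =
    qExpansion 1 E₄ * qExpansion 1 E₄ := by
  set F : ModularForm 𝒮ℒ 8 := E (show 3 ≤ 8 by norm_num) -
    ModularForm.mcast (by norm_num) (E₄.mul E₄) with hF
  have hq : qExpansion 1 F = qExpansion 1 (E (show 3 ≤ 8 by norm_num)) -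
      qExpansion 1 E₄ * qExpansion 1 E₄ := by
    rw [hF, FunLike.coe_sub, ModularForm.qExpansion_sub one_pos one_mem_strictPeriods_SL,
      coe_mcast, ModularForm.qExpansion_mul one_pos one_mem_strictPeriods_SL]
  have h0 : (qExpansion 1 F).coeff 0 = 0 := by
    rw [hq, map_sub, aux_E8_coeff, PowerSeries.coeff_mul]
    simp [aux_E4_coeff, -PowerSeries.coeff_zero_eq_constantCoeff]
  have hz : F = 0 := by
    apply ModularForm.sturm_bound_levelOne
    refine lt_of_lt_of_le ?_ (PowerSeries.nat_le_order _ 1 fun i hi => ?_)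
    · exact_mod_cast (by decide : (8 : ℤ).toNat / 12 < 1)
    · obtain rfl : i = 0 := by omega
      exact h0
  rw [hz, FunLike.coe_zero, UpperHalfPlane.qExpansion_zero] at hq
  exact sub_eq_zero.mp hq.symm

open UpperHalfPlane ModularForm MatrixGroups EisensteinSeries in
lemma aux_identity_one :
    (2 : ℂ) • (qExpansion 1 E₄ * auxTheta (qExpansion 1 E₆)) -
      (3 : ℂ) • (qExpansion 1 E₆ * auxTheta (qExpansion 1 E₄)) =
    (-1728 : ℂ) • qExpansion 1 ModularForm.discriminant := by
  rw [← auxBracket_qExpansion]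
  have hcusp : IsCuspForm auxBracket := by
    rw [isCuspForm_iff_coeffZero_eq_zero, auxBracket_qExpansion]
    simp [PowerSeries.coeff_mul, auxTheta, -PowerSeries.coeff_zero_eq_constantCoeff]
  have h1 : (qExpansion 1 auxBracket).coeff 1 = -1728 := by
    rw [auxBracket_qExpansion]
    norm_num [PowerSeries.coeff_mul, auxTheta, Finset.Nat.antidiagonal_succ, aux_E4_coeff,
      aux_E6_coeff]
  obtain ⟨g, hg⟩ := hcusp
  obtain ⟨c, hc⟩ := CuspForm.exists_smul_discriminant_of_weight_eq_twelve g
  have hgE : (g : ℍ → ℂ) = auxBracket := congrArg DFunLike.coe hg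
  have hcΔ : (c • CuspForm.discriminant : ℍ → ℂ) = g := congrArg DFunLike.coe hc
  have hgΔ := ModularForm.qExpansion_smul one_pos one_mem_strictPeriods_SL c
      CuspForm.discriminant
  rw [hcΔ, hgE] at hgΔ
  have hc_eq : c = -1728 := by
    simpa [PowerSeries.coeff_smul, discriminant_qExpansion_coeff_one, h1]
      using (congr_arg (·.coeff 1) hgΔ).symm
  rw [hgΔ, hc_eq]
  rfl

/-- The power series `∑ σ_k(n) qⁿ` over the integers. -/
noncomputable def auxSig (R : Type*) [CommRing R] (k : ℕ) : PowerSeries R :=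
  PowerSeries.mk fun n => ((ArithmeticFunction.sigma k n : ℕ) : R)

/-- The power series `∑ τ(n) qⁿ`. -/
noncomputable def auxTau (R : Type*) [CommRing R] : PowerSeries R :=
  PowerSeries.mk fun n => (ramanujanTau n : R)

lemma auxTheta_map {R S : Type*} [CommRing R] [CommRing S] (φ : R →+* S) (f : PowerSeries R) :
    PowerSeries.map φ (auxTheta f) = auxTheta (PowerSeries.map φ f) := by
  ext n; simp [auxTheta]

lemma auxSig_map {R S : Type*} [CommRing R] [CommRing S] (φ : R →+* S) (k : ℕ) :
    PowerSeries.map φ (auxSig R k) = auxSig S k := by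
  ext n; simp [auxSig]

lemma auxTau_map {R S : Type*} [CommRing R] [CommRing S] (φ : R →+* S) :
    PowerSeries.map φ (auxTau R) = auxTau S := by
  ext n; simp [auxTau]

lemma auxTheta_coeff {R : Type*} [CommRing R] (f : PowerSeries R) (n : ℕ) :
    (auxTheta f).coeff n = n * f.coeff n := by
  simp [auxTheta]

lemma auxTheta_add {R : Type*} [CommRing R] (f g : PowerSeries R) :
    auxTheta (f + g) = auxTheta f + auxTheta g := by
  ext n; simp [auxTheta, mul_add]

lemma auxTheta_ofNat_mul {R : Type*} [CommRing R] (c : ℤ) (f : PowerSeries R) :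
    auxTheta ((c : PowerSeries R) * f) = (c : PowerSeries R) * auxTheta f := by
  have h : (c : PowerSeries R) = PowerSeries.C (c : R) := by simp
  ext n
  rw [h]
  simp only [auxTheta_coeff, PowerSeries.coeff_C_mul]
  ring

lemma auxTheta_one {R : Type*} [CommRing R] : auxTheta (1 : PowerSeries R) = 0 := by
  ext n
  rcases n with _ | n <;> simp [auxTheta, PowerSeries.coeff_one]

lemma auxTheta_mul {R : Type*} [CommRing R] (f g : PowerSeries R) :
    auxTheta (f * g) = auxTheta f * g + f * auxTheta g := by
  ext n
  simp only [auxTheta_coeff, map_add, PowerSeries.coeff_mul, Finset.mul_sum,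
    ← Finset.sum_add_distrib]
  refine Finset.sum_congr rfl fun x hx => ?_
  rw [← Finset.HasAntidiagonal.mem_antidiagonal.mp hx]
  push_cast
  ring

open UpperHalfPlane ModularForm EisensteinSeries in
lemma aux_E4_eq : qExpansion 1 E₄ = 1 + ((240 : ℤ) : PowerSeries ℂ) * auxSig ℂ 3 := by
  ext n
  rw [aux_E4_coeff, show ((240 : ℤ) : PowerSeries ℂ) = PowerSeries.C 240 by rw [map_ofNat]; norm_cast]
  rcases n with _ | n <;> simp [auxSig, PowerSeries.coeff_one, PowerSeries.coeff_C_mul]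

open UpperHalfPlane ModularForm EisensteinSeries in
lemma aux_E6_eq : qExpansion 1 E₆ = 1 + ((-504 : ℤ) : PowerSeries ℂ) * auxSig ℂ 5 := by
  ext n
  rw [aux_E6_coeff, show ((-504 : ℤ) : PowerSeries ℂ) = PowerSeries.C (-504) by
    rw [map_neg, map_ofNat]; norm_cast]
  rcases n with _ | n <;>
    simp only [auxSig, PowerSeries.coeff_one, map_add, PowerSeries.coeff_C_mul] <;> simp

open UpperHalfPlane ModularForm EisensteinSeries in
lemma aux_E8_eq : qExpansion 1 (E (show 3 ≤ 8 by norm_num)) =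
    1 + ((480 : ℤ) : PowerSeries ℂ) * auxSig ℂ 7 := by
  ext n
  rw [aux_E8_coeff, show ((480 : ℤ) : PowerSeries ℂ) = PowerSeries.C 480 by rw [map_ofNat]; norm_cast]
  rcases n with _ | n <;> simp [auxSig, PowerSeries.coeff_one, PowerSeries.coeff_C_mul]

lemma aux_map_inj : Function.Injective (PowerSeries.map (Int.castRingHom ℂ)) :=
  PowerSeries.map_injective _ Int.cast_injective

lemma aux_int_one : 7 * (1 + 240 * auxSig ℤ 3) * auxTheta (auxSig ℤ 5) +
    5 * (1 - 504 * auxSig ℤ 5) * auxTheta (auxSig ℤ 3) = 12 * auxTau ℤ := by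
  have h := aux_identity_one
  have hΔ : UpperHalfPlane.qExpansion 1 ModularForm.discriminant = auxTau ℂ := by
    ext n
    rw [aux_delta_coeff]
    simp [auxTau]
  rw [hΔ, aux_E4_eq, aux_E6_eq] at h
  simp only [auxTheta_add, auxTheta_one, auxTheta_ofNat_mul, PowerSeries.smul_eq_C_mul, map_neg,
    map_ofNat] at h
  push_cast at h
  apply aux_map_inj
  simp only [map_add, map_sub, map_mul, map_one, map_ofNat, auxTheta_map, auxSig_map, auxTau_map]
  have h144 : (-144 : PowerSeries ℂ) ≠ 0 := by
    rw [show (-144 : PowerSeries ℂ) = PowerSeries.C (-144) by rw [map_neg, map_ofNat]]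
    intro h0
    have := congrArg (PowerSeries.coeff 0) h0
    simp at this
  apply mul_left_cancel₀ h144
  linear_combination h

lemma aux_int_two : auxSig ℤ 7 = auxSig ℤ 3 + 120 * auxSig ℤ 3 ^ 2 := by
  have h := aux_identity_two
  rw [aux_E4_eq, aux_E8_eq] at h
  push_cast at h
  apply aux_map_inj
  simp only [map_add, map_mul, map_pow, map_ofNat, auxSig_map]
  have h480 : (480 : PowerSeries ℂ) ≠ 0 := by
    rw [show (480 : PowerSeries ℂ) = PowerSeries.C 480 by rw [map_ofNat]]
    intro h0
    have := congrArg (PowerSeries.coeff 0) h0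
    simp at this
  apply mul_left_cancel₀ h480
  linear_combination h

lemma aux_one (R : Type*) [CommRing R] : 7 * (1 + 240 * auxSig R 3) * auxTheta (auxSig R 5) +
    5 * (1 - 504 * auxSig R 5) * auxTheta (auxSig R 3) = 12 * auxTau R := by
  have h := congrArg (PowerSeries.map (Int.castRingHom R)) aux_int_one
  simpa only [map_add, map_sub, map_mul, map_one, map_ofNat, auxTheta_map, auxSig_map,
    auxTau_map] using h

lemma aux_two (R : Type*) [CommRing R] :
    auxSig R 7 = auxSig R 3 + 120 * auxSig R 3 ^ 2 := by
  have h := congrArg (PowerSeries.map (Int.castRingHom R)) aux_int_two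
  simpa only [map_add, map_mul, map_pow, map_ofNat, auxSig_map] using h

lemma aux_natCast {p : ℕ} {m : ℕ} (h : (m : ZMod p) = 0) : (m : PowerSeries (ZMod p)) = 0 := by
  rw [show (m : PowerSeries (ZMod p)) = PowerSeries.C (m : ZMod p) by simp, h, map_zero]

lemma aux_mod_seven (n : ℕ) :
    (ramanujanTau n : ZMod 7) = n * ((ArithmeticFunction.sigma 3 n : ℕ) : ZMod 7) := by
  have h7 : (7 : PowerSeries (ZMod 7)) = 0 := aux_natCast (m := 7) (by decide)
  have h : auxTau (ZMod 7) = auxTheta (auxSig (ZMod 7) 3) := by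
    linear_combination 4 * aux_one (ZMod 7) -
      (4 * (1 + 240 * auxSig (ZMod 7) 3) * auxTheta (auxSig (ZMod 7) 5) -
        1440 * auxSig (ZMod 7) 5 * auxTheta (auxSig (ZMod 7) 3) +
        3 * auxTheta (auxSig (ZMod 7) 3) - 7 * auxTau (ZMod 7)) * h7
  have := congrArg (PowerSeries.coeff n) h
  simpa [auxTheta_coeff, auxTau, auxSig] using this

lemma aux_mod_five (n : ℕ) :
    (ramanujanTau n : ZMod 5) = n * ((ArithmeticFunction.sigma 1 n : ℕ) : ZMod 5) := by
  have h5 : (5 : PowerSeries (ZMod 5)) = 0 := aux_natCast (m := 5) (by decide)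
  have h51 : auxSig (ZMod 5) 5 = auxSig (ZMod 5) 1 := by
    ext n
    simp only [auxSig, PowerSeries.coeff_mk, ArithmeticFunction.sigma_apply]
    push_cast
    refine Finset.sum_congr rfl fun d _ => ?_
    generalize (d : ZMod 5) = x
    revert x
    decide
  have h : auxTau (ZMod 5) = auxTheta (auxSig (ZMod 5) 1) := by
    have h1 := aux_one (ZMod 5)
    rw [h51] at h1
    linear_combination 2 * h1 -
      (2 * (7 * 48 * auxSig (ZMod 5) 3 * auxTheta (auxSig (ZMod 5) 1)) +
        2 * (1 - 504 * auxSig (ZMod 5) 1) * auxTheta (auxSig (ZMod 5) 3) +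
        3 * auxTheta (auxSig (ZMod 5) 1) - 5 * auxTau (ZMod 5)) * h5
  have := congrArg (PowerSeries.coeff n) h
  simpa [auxTheta_coeff, auxTau, auxSig] using this

lemma aux_mod_three (n : ℕ) :
    (ramanujanTau n : ZMod 3) = n * ((ArithmeticFunction.sigma 1 n : ℕ) : ZMod 3) := by
  have h9 : (9 : PowerSeries (ZMod 9)) = 0 := aux_natCast (m := 9) (by decide)
  have e1 : 3 * auxTheta (auxSig (ZMod 9) 5) = 3 * auxTheta (auxSig (ZMod 9) 3) := by
    rw [show (3 : PowerSeries (ZMod 9)) = PowerSeries.C 3 by rw [map_ofNat]]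
    ext n
    simp only [PowerSeries.coeff_C_mul, auxTheta_coeff, auxSig, PowerSeries.coeff_mk,
      ArithmeticFunction.sigma_apply]
    push_cast
    simp only [Finset.mul_sum]
    refine Finset.sum_congr rfl fun d _ => ?_
    generalize (d : ZMod 9) = x
    generalize (n : ZMod 9) = y
    revert x y
    decide
  have e2 : 7 * auxTheta (auxSig (ZMod 9) 5) + 4 * auxTheta (auxSig (ZMod 9) 3) +
      auxTheta (auxSig (ZMod 9) 7) = 3 * auxTheta (auxSig (ZMod 9) 1) := by
    rw [show (3 : PowerSeries (ZMod 9)) = PowerSeries.C 3 by rw [map_ofNat],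
      show (7 : PowerSeries (ZMod 9)) = PowerSeries.C 7 by rw [map_ofNat],
      show (4 : PowerSeries (ZMod 9)) = PowerSeries.C 4 by rw [map_ofNat]]
    ext n
    simp only [PowerSeries.coeff_C_mul, auxTheta_coeff, auxSig, PowerSeries.coeff_mk,
      ArithmeticFunction.sigma_apply, map_add]
    push_cast
    simp only [Finset.mul_sum, ← Finset.sum_add_distrib]
    refine Finset.sum_congr rfl fun d _ => ?_
    generalize (d : ZMod 9) = x
    generalize (n : ZMod 9) = y
    revert x y
    decide
  have e3 : auxTheta (auxSig (ZMod 9) 7) = auxTheta (auxSig (ZMod 9) 3) +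
      240 * auxSig (ZMod 9) 3 * auxTheta (auxSig (ZMod 9) 3) := by
    have := auxTheta_ofNat_mul (R := ZMod 9) 120 (auxSig (ZMod 9) 3 ^ 2)
    push_cast at this
    rw [aux_two, auxTheta_add, this, pow_two, auxTheta_mul]
    ring
  have h : 3 * auxTau (ZMod 9) = 3 * auxTheta (auxSig (ZMod 9) 1) := by
    linear_combination (-1) * aux_one (ZMod 9) + e2 - e3 + 560 * auxSig (ZMod 9) 3 * e1 +
      (-auxTau (ZMod 9) - 280 * auxSig (ZMod 9) 5 * auxTheta (auxSig (ZMod 9) 3) +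
        160 * auxSig (ZMod 9) 3 * auxTheta (auxSig (ZMod 9) 3)) * h9
  have h' := congrArg (PowerSeries.coeff n) h
  rw [show (3 : PowerSeries (ZMod 9)) = PowerSeries.C 3 by rw [map_ofNat]] at h'
  simp only [auxTheta_coeff, auxTau, auxSig, PowerSeries.coeff_C_mul, PowerSeries.coeff_mk] at h'
  have h2 : ((3 * ramanujanTau n : ℤ) : ZMod 9) =
      ((3 * (n * (ArithmeticFunction.sigma 1 n : ℕ)) : ℤ) : ZMod 9) := by
    push_cast
    exact h'
  have h3 := (ZMod.intCast_eq_intCast_iff_dvd_sub _ _ 9).mp h2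
  have h4 : ((ramanujanTau n : ℤ) : ZMod 3) = ((n * (ArithmeticFunction.sigma 1 n : ℕ) : ℤ) : ZMod 3) := by
    rw [ZMod.intCast_eq_intCast_iff_dvd_sub]
    push_cast at h3 ⊢
    omega
  rw [h4]
  push_cast
  rfl

lemma aux_eis (p : ℕ) [Fact p.Prime] (ω : ℤ → ℤ_[p])
    (hω : ∀ m : ℤ, PadicInt.toZMod (ω m) = (m : ZMod p)) (j n : ℕ) :
    PadicInt.toZMod (eisCoeff p ω 2 (j + 1) 0 n) =
      n * ((ArithmeticFunction.sigma j n : ℕ) : ZMod p) := by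
  rw [eisCoeff, map_sum, ArithmeticFunction.sigma_apply, ← Nat.sum_div_divisors n fun d => d ^ j]
  rw [Nat.cast_sum, Finset.mul_sum]
  refine Finset.sum_congr rfl fun d hd => ?_
  have hn : ((n / d : ℕ) : ZMod p) * (d : ZMod p) = n := by
    rw [← Nat.cast_mul, Nat.div_mul_cancel (Nat.dvd_of_mem_divisors hd)]
  simp only [map_mul, map_pow, hω, map_natCast, pow_zero, mul_one, Int.cast_natCast, Nat.cast_pow]
  rw [← hn]
  ring

/-- Theorem A: for each `p ∈ {3, 5, 7}` there is a full congruence of Fourier coefficients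
modulo `p` between `Δ` and the weight-two Eisenstein series `E_p`, where
`E_3 = E_{2, ω_3², 𝟙}`, `E_5 = E_{2, ω_5², 𝟙}` and `E_7 = E_{2, ω_7⁴, 𝟙}`.
Each `ωₚ` is the Teichmüller character mod `p`, characterized by `ωₚ(m) ≡ m (mod p)` together
with its values being Teichmüller representatives (`ωₚ(m)^p = ωₚ(m)`); the exponent `0` on the
second character gives the trivial character `𝟙`. -/
theorem tau_congruent_weight_two_eisenstein
    (ω₃ : ℤ → ℤ_[3])
    (hω₃_cong : ∀ m : ℤ, PadicInt.toZMod (ω₃ m) = (m : ZMod 3))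
    (hω₃_teich : ∀ m : ℤ, ω₃ m ^ 3 = ω₃ m)
    (ω₅ : ℤ → ℤ_[5])
    (hω₅_cong : ∀ m : ℤ, PadicInt.toZMod (ω₅ m) = (m : ZMod 5))
    (hω₅_teich : ∀ m : ℤ, ω₅ m ^ 5 = ω₅ m)
    (ω₇ : ℤ → ℤ_[7])
    (hω₇_cong : ∀ m : ℤ, PadicInt.toZMod (ω₇ m) = (m : ZMod 7))
    (hω₇_teich : ∀ m : ℤ, ω₇ m ^ 7 = ω₇ m) :
    ∀ n : ℕ,
      ((ramanujanTau n : ℤ) : ZMod 3) = PadicInt.toZMod (eisCoeff 3 ω₃ 2 2 0 n) ∧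
      ((ramanujanTau n : ℤ) : ZMod 5) = PadicInt.toZMod (eisCoeff 5 ω₅ 2 2 0 n) ∧
      ((ramanujanTau n : ℤ) : ZMod 7) = PadicInt.toZMod (eisCoeff 7 ω₇ 2 4 0 n) := by
  intro n
  refine ⟨?_, ?_, ?_⟩
  · rw [aux_mod_three, aux_eis 3 ω₃ hω₃_cong 1]
  · rw [aux_mod_five, aux_eis 5 ω₅ hω₅_cong 1]
  · rw [aux_mod_seven, aux_eis 7 ω₇ hω₇_cong 3]
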